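/- Let q be a prime with q ≡ 1 or 8 (mod 9), let p be a prime with p ≡ 1 (mod 3) and p ≠ q, and let L, M be integers with 4p = L² + 27M². Then q is a cubic residue modulo p if and only if there exists an integer t such that (t³ − 3t² − 9t + 3)·L ≡ −3(t³ + 9t² − 9t − 9)·M (mod q). -/

import Mathlib

/-!
Let `χ` be a cubic character mod `p`. Up to sign and conjugation, twice the Jacobi sum `J = J(χ, χ)`
is `L + 3√-3 M`. Over a field of characteristic `q`, the cube of `G(χ) / G(χ̄)` is `J / J̄`, and the
Frobenius map sends `G(χ)` to `(χ ^ q)⁻¹(q) G(χ ^ q)`. Writing `q = 3m ± 1`, this gives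
`χ(q) = 1 ↔ (J / J̄) ^ m = 1`.

The Cayley transform `t ↦ (t + √-3) / (t - √-3)` maps the integers `t ≠ ±√-3` mod `q` onto the
solutions `v ≠ 1` of `v ^ (3m) = 1`, so `c ^ m = 1` iff `c = ((t + √-3) / (t - √-3)) ^ 3` for some
`t`. When `q ≡ ±1 (mod 9)` we have `3 ∣ m`, so the condition on `J / J̄` is equivalent to the one on
`c = ω J / J̄`; clearing denominators for this `c` gives the stated congruence.
-/

open scoped QuadraticAlgebra

theorem isPrimitiveRoot_three_iff {R : Type*} [CommRing R] [IsDomain R] [NeZero (3 : R)] {w : R} :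
    IsPrimitiveRoot w 3 ↔ w ^ 2 + w + 1 = 0 := by
  have : NeZero ((3 : ℕ) : R) := by simpa
  rw [← Polynomial.isRoot_cyclotomic_iff, Polynomial.cyclotomic_three]
  simp [Polynomial.IsRoot.def]

theorem natCast_ne_zero_of_char_eq_mul_add_unit {R : Type*} [Ring R] [Nontrivial R] {q : ℕ}
    [CharP R q] {n m : ℕ} {ε : ℤˣ} (hq : (q : ℤ) = n * m + ε) : (n : R) ≠ 0 := by
  intro hn
  have hε : ((ε : ℤ) : R) = 0 := by simpa [hn] using (congrArg (Int.cast (R := R)) hq).symm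
  exact (ε.isUnit.map (Int.castRingHom R)).ne_zero hε

theorem sq_eq_sq_of_mul_prime_eq_sq_add_mul_sq {p : ℕ} (hp : p.Prime) {c d L M A B : ℤ} (hc : c ≠ 0)
    (hcd : c ^ 2 < d) (h : c * p = L ^ 2 + d * M ^ 2) (h' : c * p = A ^ 2 + d * B ^ 2) :
    L ^ 2 = A ^ 2 ∧ M ^ 2 = B ^ 2 := by
  have hp0 : (0 : ℤ) < p := by exact_mod_cast hp.pos
  have of_dvd {B : ℤ} (h' : c * p = A ^ 2 + d * B ^ 2) (hdvd : (p : ℤ) ∣ L * B - A * M) :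
      L ^ 2 = A ^ 2 ∧ M ^ 2 = B ^ 2 := by
    obtain ⟨k, hk⟩ := hdvd
    have brahmagupta : (c * p) ^ 2 = (L * A + d * M * B) ^ 2 + d * (L * B - A * M) ^ 2 := by
      linear_combination c * p * h + (L ^ 2 + d * M ^ 2) * h'
    have hk0 : k = 0 := by
      by_contra hk0
      have : 1 ≤ k ^ 2 := Int.add_one_le_of_lt (sq_pos_of_ne_zero hk0)
      rw [hk] at brahmagupta
      have : 0 ≤ c ^ 2 := sq_nonneg c
      nlinarith [sq_nonneg (L * A + d * M * B), mul_pos hp0 hp0]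
    have hcross : L * B - A * M = 0 := by rw [hk, hk0, mul_zero]
    have hBM : c * p * (B ^ 2 - M ^ 2) = 0 := by
      linear_combination (L * B + A * M) * hcross + B ^ 2 * h - M ^ 2 * h'
    have : B ^ 2 - M ^ 2 = 0 := (mul_eq_zero.1 hBM).resolve_left (mul_ne_zero hc hp0.ne')
    constructor <;> grind
  have hdvd : (p : ℤ) ∣ (L * B - A * M) * (L * B + A * M) :=
    ⟨c * (B ^ 2 - M ^ 2), by linear_combination M ^ 2 * h' - B ^ 2 * h⟩
  rcases (Nat.prime_iff_prime_int.1 hp).dvd_or_dvd hdvd with hminus | hplus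
  · exact of_dvd h' hminus
  · rw [← neg_sq B]
    exact of_dvd (by rwa [neg_sq]) (by rw [← dvd_neg]; convert hplus using 1; ring)

section MulChar

variable {K R : Type*} [Field K] [CommRing R]

theorem mulChar_apply_eq_one_iff_exists_pow_orderOf [Finite K] (χ : MulChar K R) {y : K}
    (hy : y ≠ 0) :
    χ y = 1 ↔ ∃ x, x ^ orderOf χ = y := by
  obtain ⟨g, hg⟩ := IsCyclic.exists_generator (α := Kˣ)
  have pow_eq_one_iff (k : ℕ) : χ g ^ k = 1 ↔ orderOf χ ∣ k := by
    rw [orderOf_dvd_iff_pow_eq_one, MulChar.eq_iff hg, MulChar.pow_apply_coe, MulChar.one_apply_coe]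
  constructor
  · intro h
    obtain ⟨k, hk : g ^ k = Units.mk0 y hy⟩ := mem_powers_iff_mem_zpowers.2 (hg (Units.mk0 y hy))
    have hgy : (g : K) ^ k = y := by simpa using congrArg Units.val hk
    rw [← hgy, map_pow, pow_eq_one_iff] at h
    obtain ⟨m, rfl⟩ := h
    exact ⟨(g : K) ^ m, by rw [← pow_mul', hgy]⟩
  · rintro ⟨x, rfl⟩
    have hx : x ≠ 0 := by
      rintro rfl
      exact hy (zero_pow χ.orderOf_pos.ne')
    rw [map_pow, ← MulChar.pow_apply' χ χ.orderOf_pos.ne', pow_orderOf_eq_one,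
      MulChar.one_apply hx.isUnit]

theorem exists_pow_modEq_iff {p n : ℕ} [Fact p.Prime] {χ : MulChar (ZMod p) R}
    (hχ : orderOf χ = n) {a : ℤ} (ha : (a : ZMod p) ≠ 0) :
    (∃ x : ℤ, x ^ n ≡ a [ZMOD p]) ↔ χ a = 1 := by
  rw [← hχ, mulChar_apply_eq_one_iff_exists_pow_orderOf χ ha, ZMod.intCast_surjective.exists]
  simp only [← ZMod.intCast_eq_intCast_iff, Int.cast_pow]

theorem ringHomComp_apply_eq_one_iff [Finite K] [IsDomain R] {S : Type*} [CommRing S] {n : ℕ}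
    [NeZero n] {χ : MulChar K R} (hχ : χ ^ n = 1) {μ : R} (hμ : IsPrimitiveRoot μ n) {f : R →+* S}
    (hf : IsPrimitiveRoot (f μ) n) {x : K} (hx : x ≠ 0) :
    χ.ringHomComp f x = 1 ↔ χ x = 1 := by
  obtain ⟨k, -, hk⟩ := MulChar.exists_apply_eq_pow hχ hμ hx
  rw [MulChar.ringHomComp_apply, hk, map_pow, hf.pow_eq_one_iff_dvd, hμ.pow_eq_one_iff_dvd]

theorem jacobiSum_mul_jacobiSum_inv_of_isDomain [Fintype K] [IsDomain R]
    (h : ringChar R ≠ ringChar K) {χ φ : MulChar K R} (hχ : χ ≠ 1) (hφ : φ ≠ 1) (hχφ : χ * φ ≠ 1) :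
    jacobiSum χ φ * jacobiSum χ⁻¹ φ⁻¹ = Fintype.card K := by
  let f := algebraMap R (FractionRing R)
  have hf : Function.Injective f := IsFractionRing.injective R (FractionRing R)
  have hchar : ringChar (FractionRing R) ≠ ringChar K := by
    rwa [ringChar.eq (FractionRing R) (ringChar R)]
  apply hf
  simpa only [map_mul, map_natCast, ← jacobiSum_ringHomComp, MulChar.ringHomComp_inv] using
    jacobiSum_mul_jacobiSum_inv hchar ((MulChar.ringHomComp_ne_one_iff hf).2 hχ)
      ((MulChar.ringHomComp_ne_one_iff hf).2 hφ)
      (MulChar.ringHomComp_mul χ φ f ▸ (MulChar.ringHomComp_ne_one_iff hf).2 hχφ)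

end MulChar

section Reciprocity

variable {K F : Type*} [Field K] [Fintype K] [Field F]

theorem jacobiSum_div_jacobiSum_inv (hKF : (Fintype.card K : F) ≠ 0) {χ : MulChar K F}
    (hχ₃ : χ ^ 3 = 1) (hχ : χ ≠ 1) {ψ : AddChar K F} (hψ : ψ.IsPrimitive) :
    jacobiSum χ χ / jacobiSum χ⁻¹ χ⁻¹ = (gaussSum χ ψ / gaussSum χ⁻¹ ψ) ^ 3 := by
  have hχχ : χ * χ = χ⁻¹ := eq_inv_of_mul_eq_one_left (by rw [← hχ₃, pow_succ, pow_two])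
  have hinv : χ⁻¹ * χ⁻¹ = χ := by rw [← mul_inv, hχχ, inv_inv]
  have hχ' : χ⁻¹ ≠ 1 := inv_ne_one.2 hχ
  have hJ : jacobiSum χ χ = gaussSum χ ψ ^ 2 / gaussSum χ⁻¹ ψ := by
    rw [jacobiSum_eq_gaussSum_mul_gaussSum_div_gaussSum hKF (by rwa [hχχ]) hψ, hχχ, pow_two]
  have hJ' : jacobiSum χ⁻¹ χ⁻¹ = gaussSum χ⁻¹ ψ ^ 2 / gaussSum χ ψ := by
    rw [jacobiSum_eq_gaussSum_mul_gaussSum_div_gaussSum hKF (by rwa [hinv]) hψ, hinv, pow_two]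
  have hG := gaussSum_ne_zero_of_nontrivial hKF hχ hψ
  have hG' := gaussSum_ne_zero_of_nontrivial hKF hχ' hψ
  rw [hJ, hJ']
  field_simp

theorem gaussSum_pow_char {q : ℕ} [Fact q.Prime] [CharP F q] (χ : MulChar K F) (ψ : AddChar K F)
    (hq : (q : K) ≠ 0) : gaussSum χ ψ ^ q = (χ ^ q)⁻¹ q * gaussSum (χ ^ q) ψ := by
  rw [gaussSum_frob, AddChar.pow_mulShift]
  exact gaussSum_mulShift_eq (χ ^ q) ψ (Units.mk0 (q : K) hq)

theorem gaussSum_div_gaussSum_inv_pow {q n : ℕ} [Fact q.Prime] [CharP F q] (hq : (q : K) ≠ 0)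
    {ε : ℤˣ} (hn : (q : ℤ) = n + ε) (hKF : (Fintype.card K : F) ≠ 0) {χ : MulChar K F} (hχ : χ ≠ 1)
    (hχq : χ ^ q = χ ^ (ε : ℤ)) {ψ : AddChar K F} (hψ : ψ.IsPrimitive) :
    (gaussSum χ ψ / gaussSum χ⁻¹ ψ) ^ n = (χ ^ (-2 * ε : ℤ)) q := by
  have hG := gaussSum_ne_zero_of_nontrivial hKF hχ hψ
  have hG' := gaussSum_ne_zero_of_nontrivial hKF (inv_ne_one.2 hχ) hψ
  have hu : gaussSum χ ψ / gaussSum χ⁻¹ ψ ≠ 0 := div_ne_zero hG hG'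
  rw [← mul_left_inj' (zpow_ne_zero ε hu), ← zpow_natCast, ← zpow_add₀ hu, ← hn, zpow_natCast,
    div_pow, gaussSum_pow_char χ ψ hq, gaussSum_pow_char χ⁻¹ ψ hq, inv_pow, hχq]
  have hχq0 : χ q ≠ 0 := (hq.isUnit.map χ).ne_zero
  have hχsq : (χ ^ 2) q = χ q ^ 2 := MulChar.pow_apply' χ two_ne_zero q
  rcases Int.units_eq_one_or ε with rfl | rfl
  · simp only [Units.val_one, zpow_ofNat, pow_one, MulChar.inv_apply_eq_inv', inv_inv,
      Int.reduceNeg, mul_one, zpow_neg, hχsq]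
    field_simp
  · simp only [Units.val_neg, Units.val_one, Int.reduceNeg, zpow_neg, zpow_ofNat, pow_one, inv_inv,
      MulChar.inv_apply_eq_inv', mul_neg, mul_one, neg_neg, hχsq, inv_div]
    field_simp

theorem mulChar_natCast_eq_one_iff_jacobiSum {q m : ℕ} [Fact q.Prime] [CharP F q]
    (hq : (q : K) ≠ 0) {ε : ℤˣ} (hm : (q : ℤ) = 3 * m + ε) (hKF : (Fintype.card K : F) ≠ 0)
    {χ : MulChar K F} (hχ₃ : χ ^ 3 = 1) (hχ : χ ≠ 1) {ψ : AddChar K F} (hψ : ψ.IsPrimitive) :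
    χ q = 1 ↔ (jacobiSum χ χ / jacobiSum χ⁻¹ χ⁻¹) ^ m = 1 := by
  have hχq : χ ^ q = χ ^ (ε : ℤ) := by
    rw [← zpow_natCast, hm, zpow_add, zpow_mul, zpow_ofNat, hχ₃, one_zpow, one_mul]
  have hχε : χ ^ (-2 * ε : ℤ) = χ ^ (ε : ℤ) := by
    rw [show (-2 * ε : ℤ) = 3 * -ε + ε by ring, zpow_add, zpow_mul, zpow_ofNat, hχ₃, one_zpow,
      one_mul]
  rw [jacobiSum_div_jacobiSum_inv hKF hχ₃ hχ hψ, ← pow_mul,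
    gaussSum_div_gaussSum_inv_pow hq (by exact_mod_cast hm) hKF hχ hχq hψ, hχε]
  rcases Int.units_eq_one_or ε with rfl | rfl
  · simp
  · simp [MulChar.inv_apply_eq_inv']

end Reciprocity

/-- The ring `ℤ[ω]` of Eisenstein integers, presented by `ω ^ 2 = -1 - ω`. -/
abbrev EisensteinInt : Type := QuadraticAlgebra ℤ (-1) (-1)

namespace EisensteinInt

theorem omega_sq_add : (ω : EisensteinInt) ^ 2 + ω + 1 = 0 := by
  rw [pow_two]
  ext <;> simp

theorem map_omega_sq_add {R : Type*} [CommRing R] (f : EisensteinInt →+* R) :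
    f ω ^ 2 + f ω + 1 = 0 := by
  simpa using congrArg f omega_sq_add

theorem nonempty_ringHom (F : Type*) [Field F] [IsAlgClosed F] :
    Nonempty (EisensteinInt →+* F) := by
  obtain ⟨w, hw⟩ := IsAlgClosed.exists_root (Polynomial.cyclotomic 3 F) (by
    rw [Polynomial.degree_cyclotomic]; decide)
  have hw' : w ^ 2 + w + 1 = 0 := by
    simpa [Polynomial.cyclotomic_three, Polynomial.IsRoot.def] using hw
  exact ⟨(QuadraticAlgebra.lift (R := ℤ) ⟨w, by simp; linear_combination hw'⟩).toRingHom⟩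

theorem norm_nonneg (z : EisensteinInt) : 0 ≤ z.norm := by
  rw [QuadraticAlgebra.norm_def]
  nlinarith [sq_nonneg (2 * z.re - z.im), sq_nonneg z.im]

theorem norm_eq_zero {z : EisensteinInt} (hz : z.norm = 0) : z = 0 := by
  rw [QuadraticAlgebra.norm_def] at hz
  have him : z.im = 0 := by
    rw [← sq_eq_zero_iff]
    nlinarith [sq_nonneg (2 * z.re - z.im), sq_nonneg z.im]
  have hre : z.re = 0 := by simpa [him] using hz
  exact QuadraticAlgebra.ext hre him

instance : NoZeroDivisors EisensteinInt where
  eq_zero_or_eq_zero_of_mul_eq_zero {x y} hxy := by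
    have : x.norm * y.norm = 0 := by rw [← map_mul, hxy, QuadraticAlgebra.norm_zero]
    exact (mul_eq_zero.1 this).imp norm_eq_zero norm_eq_zero

instance : IsDomain EisensteinInt := NoZeroDivisors.to_isDomain _

theorem isPrimitiveRoot_omega : IsPrimitiveRoot (ω : EisensteinInt) 3 :=
  have : NeZero (3 : EisensteinInt) := ⟨OfNat.ofNat_ne_zero 3⟩
  isPrimitiveRoot_three_iff.2 omega_sq_add

theorem mul_star_eq_norm (z : EisensteinInt) : z * star z = z.norm :=
  (QuadraticAlgebra.algebraMap_norm_eq_mul_star z).symm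

theorem mul_star_eq_one_of_isUnit {z : EisensteinInt} (hz : IsUnit z) : z * star z = 1 := by
  have hnorm := Int.isUnit_iff.1 (QuadraticAlgebra.isUnit_iff_norm_isUnit.1 hz)
  have := norm_nonneg z
  rw [mul_star_eq_norm, hnorm.resolve_right (by lia), Int.cast_one]

/-- The square root `2ω + 1` of `-3`. The form `L² + 27M²` is the norm of `L + 3√-3 M`. -/
def sqrtNegThree : EisensteinInt := 2 * ω + 1

@[simp]
theorem star_sqrtNegThree : star sqrtNegThree = -sqrtNegThree := by
  ext <;> simp [sqrtNegThree]

theorem star_add_three_mul_sqrtNegThree_mul (A B : ℤ) :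
    star (A + 3 * sqrtNegThree * B : EisensteinInt) = A - 3 * sqrtNegThree * B := by
  rw [sub_eq_add_neg]
  simp

theorem ringHomComp_starRingEnd {K : Type*} [CommMonoid K] (χ : MulChar K EisensteinInt) :
    χ.ringHomComp (starRingEnd EisensteinInt) = χ⁻¹ := by
  rw [eq_comm, inv_eq_iff_mul_eq_one]
  refine MulChar.ext fun x ↦ ?_
  rw [MulChar.mul_apply, MulChar.ringHomComp_apply, starRingEnd_apply, MulChar.one_apply_coe,
    mul_star_eq_one_of_isUnit (x.isUnit.map χ)]

section CubicJacobiSum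

variable {K : Type*} [Field K] [Fintype K]

theorem jacobiSum_inv_inv (χ φ : MulChar K EisensteinInt) :
    jacobiSum χ⁻¹ φ⁻¹ = star (jacobiSum χ φ) := by
  rw [← ringHomComp_starRingEnd, ← ringHomComp_starRingEnd, jacobiSum_ringHomComp,
    starRingEnd_apply]

theorem norm_jacobiSum {χ φ : MulChar K EisensteinInt} (hχ : χ ≠ 1) (hφ : φ ≠ 1)
    (hχφ : χ * φ ≠ 1) : (jacobiSum χ φ).norm = Fintype.card K := by
  have hchar : ringChar EisensteinInt ≠ ringChar K := by
    rw [ringChar.eq EisensteinInt 0]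
    exact (CharP.ringChar_ne_zero_of_finite K).symm
  have := jacobiSum_mul_jacobiSum_inv_of_isDomain hchar hχ hφ hχφ
  rw [jacobiSum_inv_inv, mul_star_eq_norm] at this
  exact_mod_cast this

theorem three_dvd_im_jacobiSum {χ φ : MulChar K EisensteinInt} (hχ : χ ^ 3 = 1) (hφ : φ ^ 3 = 1)
    (hK : 3 ∣ Fintype.card K - 1) : 3 ∣ (jacobiSum χ φ).im := by
  obtain ⟨z, -, hz⟩ :=
    exists_jacobiSum_eq_neg_one_add (by norm_num) hχ hφ hK isPrimitiveRoot_omega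
  have hz' : jacobiSum χ φ = -1 + 3 * (-ω * z) := by
    rw [hz]
    linear_combination z * omega_sq_add
  exact ⟨z.im - z.re, by simp [hz']; ring⟩

theorem exists_two_mul_jacobiSum_eq {χ : MulChar K EisensteinInt} (hχ : orderOf χ = 3) :
    ∃ A B : ℤ, 2 * jacobiSum χ χ = A + 3 * sqrtNegThree * B ∧
      4 * Fintype.card K = A ^ 2 + 27 * B ^ 2 := by
  have hχ₃ : χ ^ 3 = 1 := by rw [← hχ, pow_orderOf_eq_one]
  have hχ1 : χ ≠ 1 := by
    rintro rfl
    simp at hχ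
  have hχχ : χ * χ ≠ 1 := by
    rw [← pow_two]
    exact pow_ne_one_of_lt_orderOf two_ne_zero (by lia)
  have hK : 3 ∣ Fintype.card K - 1 := hχ ▸ MulChar.orderOf_dvd_card_sub_one K χ
  obtain ⟨b, hb⟩ := three_dvd_im_jacobiSum hχ₃ hχ₃ hK
  have hnorm := norm_jacobiSum hχ1 hχ1 hχχ
  refine ⟨2 * (jacobiSum χ χ).re - 3 * b, b, ?_, ?_⟩
  · ext
    · simp [sqrtNegThree]
    · simp [sqrtNegThree, hb]
      ring
  · rw [← hnorm, QuadraticAlgebra.norm_def, hb]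
    ring

end CubicJacobiSum

theorem exists_mulChar_two_mul_jacobiSum_eq {p : ℕ} [Fact p.Prime] (hp : p % 3 = 1) {L M : ℤ}
    (h : 4 * p = L ^ 2 + 27 * M ^ 2) :
    ∃ χ : MulChar (ZMod p) EisensteinInt, orderOf χ = 3 ∧
      (2 * jacobiSum χ χ = L + 3 * sqrtNegThree * M ∨
        2 * jacobiSum χ χ = -(L + 3 * sqrtNegThree * M)) := by
  have hK : 3 ∣ Fintype.card (ZMod p) - 1 := by rw [ZMod.card]; lia
  obtain ⟨χ, hχ⟩ := MulChar.exists_mulChar_orderOf (ZMod p) hK isPrimitiveRoot_omega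
  obtain ⟨A, B, hJ, hAB⟩ := exists_two_mul_jacobiSum_eq hχ
  rw [ZMod.card] at hAB
  obtain ⟨hL, hM⟩ :=
    sq_eq_sq_of_mul_prime_eq_sq_add_mul_sq Fact.out four_ne_zero (by norm_num) hAB h
  have hJ' : 2 * jacobiSum χ⁻¹ χ⁻¹ = A - 3 * sqrtNegThree * B := by
    rw [jacobiSum_inv_inv, ← star_add_three_mul_sqrtNegThree_mul, ← hJ]
    simp
  have hχ' : orderOf χ⁻¹ = 3 := by rw [orderOf_inv, hχ]
  rcases sq_eq_sq_iff_eq_or_eq_neg.1 hL, sq_eq_sq_iff_eq_or_eq_neg.1 hM with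
    ⟨rfl | rfl, rfl | rfl⟩
  · exact ⟨χ, hχ, .inl hJ⟩
  · exact ⟨χ⁻¹, hχ', .inl (by rw [hJ']; push_cast; ring)⟩
  · exact ⟨χ⁻¹, hχ', .inr (by rw [hJ']; push_cast; ring)⟩
  · exact ⟨χ, hχ, .inr (by rw [hJ]; push_cast; ring)⟩

end EisensteinInt

section CayleyTransform

theorem pow_eq_one_iff_pow_eq_zpow {G₀ : Type*} [GroupWithZero G₀] {x : G₀} (hx : x ≠ 0) {q n : ℕ}
    {e : ℤ} (hn : (q : ℤ) = n + e) : x ^ n = 1 ↔ x ^ q = x ^ e := by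
  rw [← zpow_natCast x q, hn, zpow_add₀ hx, zpow_natCast, mul_eq_right₀ (zpow_ne_zero e hx)]

variable {F : Type*} [Field F] {q : ℕ} [Fact q.Prime] [CharP F q]

theorem exists_intCast_eq_iff_pow_eq_self {x : F} : (∃ t : ℤ, (t : F) = x) ↔ x ^ q = x := by
  rw [← Subfield.mem_bot_iff_pow_eq_self, mem_bot_iff_intCast q]

theorem pow_eq_one_iff_exists_intCast_add_eq {n : ℕ} {ε : ℤˣ} (hn : (q : ℤ) = n + ε) {s v : F}
    (hs : s ^ q = (ε : ℤ) * s) (hs0 : 2 * s ≠ 0) (hv0 : v ≠ 0) (hv1 : v ≠ 1) :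
    v ^ n = 1 ↔ ∃ t : ℤ, t + s = v * (t - s) := by
  have hv1' : v - 1 ≠ 0 := sub_ne_zero.2 hv1
  rw [pow_eq_one_iff_pow_eq_zpow hv0 hn]
  constructor
  · intro hvq
    obtain ⟨t, ht⟩ : ∃ t : ℤ, (t : F) = s * (v + 1) / (v - 1) := by
      rw [exists_intCast_eq_iff_pow_eq_self (q := q), div_pow, mul_pow, add_pow_char,
        sub_pow_char, one_pow, hs, hvq]
      rcases Int.units_eq_one_or ε with rfl | rfl
      · simp
      · have : 1 - v ≠ 0 := sub_ne_zero.2 hv1.symm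
        simp only [Units.val_neg, Units.val_one, zpow_neg_one, Int.cast_neg, Int.cast_one]
        field_simp
        grind
    refine ⟨t, ?_⟩
    rw [ht]
    field_simp
    ring
  · rintro ⟨t, ht⟩
    have hts : (t - s : F) ≠ 0 := fun h ↦ hs0 (by linear_combination ht + (v - 1) * h)
    have htq : (t : F) ^ q = t := exists_intCast_eq_iff_pow_eq_self.1 ⟨t, rfl⟩
    have hfrob : t + (ε : ℤ) * s = v ^ q * (t - (ε : ℤ) * s) := by
      simpa only [mul_pow, add_pow_char, sub_pow_char, htq, hs] using congrArg (· ^ q) ht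
    apply mul_right_cancel₀ hts
    rcases Int.units_eq_one_or ε with rfl | rfl
    · simp only [Units.val_one, Int.cast_one, one_mul, zpow_one] at hfrob ⊢
      rw [← ht, hfrob]
    · simp only [Units.val_neg, Units.val_one, zpow_neg_one, Int.cast_neg, Int.cast_one] at hfrob ⊢
      field_simp
      grind

theorem pow_eq_one_iff_exists_intCast_add_pow_eq [IsAlgClosed F] {d m : ℕ} (hd : 1 < d) {ε : ℤˣ}
    (hm : (q : ℤ) = d * m + ε) {s c w : F} (hw : IsPrimitiveRoot w d)
    (hs : s ^ q = (ε : ℤ) * s) (hs0 : 2 * s ≠ 0) (hc : c ≠ 0) :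
    c ^ m = 1 ↔ ∃ t : ℤ, (t + s) ^ d = c * (t - s) ^ d := by
  have hd0 : d ≠ 0 := by lia
  have pow_iff {v : F} (hv : v ^ d = c) (hv1 : v ≠ 1) :
      c ^ m = 1 ↔ ∃ t : ℤ, t + s = v * (t - s) := by
    have hv0 : v ≠ 0 := by
      rintro rfl
      exact hc (by rw [← hv, zero_pow hd0])
    rw [← hv, ← pow_mul]
    exact pow_eq_one_iff_exists_intCast_add_eq (by exact_mod_cast hm) hs hs0 hv0 hv1
  constructor
  · intro hcm
    obtain ⟨v, hv, hv1⟩ : ∃ v : F, v ^ d = c ∧ v ≠ 1 := by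
      obtain ⟨v, hv⟩ := IsAlgClosed.exists_pow_nat_eq c (by lia : 0 < d)
      by_cases hv1 : v = 1
      · exact ⟨w, by rw [← hv, hv1, hw.pow_eq_one, one_pow], hw.ne_one hd⟩
      · exact ⟨v, hv, hv1⟩
    obtain ⟨t, ht⟩ := (pow_iff hv hv1).1 hcm
    exact ⟨t, by rw [ht, mul_pow, hv]⟩
  · rintro ⟨t, ht⟩
    have hts : (t - s : F) ≠ 0 := by
      intro h
      rw [h, zero_pow hd0, mul_zero, pow_eq_zero_iff hd0] at ht
      exact hs0 (by linear_combination ht - h)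
    refine (pow_iff (v := (t + s) / (t - s)) ?_ ?_).2 ⟨t, (div_mul_cancel₀ _ hts).symm⟩
    · rw [div_pow, ht, mul_div_cancel_right₀ _ (pow_ne_zero d hts)]
    · rw [Ne, div_eq_one_iff_eq hts]
      exact fun h ↦ hs0 (by linear_combination h)

end CayleyTransform

-- With `s = √-3 = 2w + 1`, `P = L + 3sM` and `Q = L - 3sM`, the inner difference on the left is
-- `w * (P / Q) - ((t + s) / (t - s)) ^ 3` with denominators cleared.
theorem slope_identity {R : Type*} [CommRing R] {w : R} (hw : w ^ 2 + w + 1 = 0) (L M t : R) :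
    w * (w * (L + 3 * (2 * w + 1) * M) * (t - (2 * w + 1)) ^ 3 -
        (t + (2 * w + 1)) ^ 3 * (L - 3 * (2 * w + 1) * M)) =
      -(2 * w + 1) * ((t ^ 3 - 3 * t ^ 2 - 9 * t + 3) * L -
        -3 * (t ^ 3 + 9 * t ^ 2 - 9 * t - 9) * M) := by
  grind

theorem two_mul_add_one_pow_char {F : Type*} [Field F] {q : ℕ} [Fact q.Prime] [CharP F q] {m : ℕ}
    {ε : ℤˣ} (hq : (q : ℤ) = 3 * m + ε) {w : F} (hw : w ^ 2 + w + 1 = 0) :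
    (2 * w + 1) ^ q = (ε : ℤ) * (2 * w + 1) := by
  have hw0 : w ≠ 0 := by
    rintro rfl
    simp at hw
  have hw3 : w ^ 3 = 1 := by linear_combination (w - 1) * hw
  have hwq : w ^ q = w ^ (ε : ℤ) := by
    rw [← pow_eq_one_iff_pow_eq_zpow hw0 (n := 3 * m) (by exact_mod_cast hq), pow_mul, hw3, one_pow]
  have h2q : (2 : F) ^ q = 2 := exists_intCast_eq_iff_pow_eq_self.1 ⟨2, by norm_num⟩
  rw [add_pow_char, mul_pow, one_pow, h2q, hwq]
  rcases Int.units_eq_one_or ε with rfl | rfl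
  · simp
  · have hinv : w⁻¹ = w ^ 2 := inv_eq_of_mul_eq_one_right (by rw [← pow_succ', hw3])
    simp only [Units.val_neg, Units.val_one, zpow_neg_one, Int.cast_neg, Int.cast_one, hinv]
    linear_combination 2 * hw

theorem exists_slope_modEq_iff {F : Type*} [Field F] [IsAlgClosed F] {q : ℕ} [Fact q.Prime]
    [CharP F q] {k : ℕ} {ε : ℤˣ} (hq : (q : ℤ) = 9 * k + ε) {w : F}
    (hw : w ^ 2 + w + 1 = 0) {L M : ℤ} (hLM : ¬(q : ℤ) ∣ L ^ 2 + 27 * M ^ 2) :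
    (∃ t : ℤ, (t ^ 3 - 3 * t ^ 2 - 9 * t + 3) * L ≡
      -3 * (t ^ 3 + 9 * t ^ 2 - 9 * t - 9) * M [ZMOD q]) ↔
    ((L + 3 * (2 * w + 1) * M) / (L - 3 * (2 * w + 1) * M) : F) ^ (3 * k) = 1 := by
  have hq3 : (q : ℤ) = 3 * (3 * k : ℕ) + ε := by rw [hq]; push_cast; ring
  have hq2 : q ≠ 2 := by
    rcases Int.units_eq_one_or ε with rfl | rfl <;> simp at hq <;> lia
  have h2 : (2 : F) ≠ 0 := Ring.two_ne_zero (by rwa [ringChar.eq F q])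
  have : NeZero (3 : F) := ⟨by exact_mod_cast natCast_ne_zero_of_char_eq_mul_add_unit hq3⟩
  have hw3 : IsPrimitiveRoot w 3 := isPrimitiveRoot_three_iff.2 hw
  have hw0 : w ≠ 0 := hw3.ne_zero three_ne_zero
  have hs0 : 2 * w + 1 ≠ 0 := by
    intro h
    exact three_ne_zero (α := F) (by linear_combination 4 * hw - (2 * w + 1) * h)
  have hPQ : (L + 3 * (2 * w + 1) * M) * (L - 3 * (2 * w + 1) * M) ≠ (0 : F) := by
    rw [← CharP.intCast_eq_zero_iff F q] at hLM
    convert hLM using 1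
    push_cast
    linear_combination -36 * M ^ 2 * hw
  have hP := left_ne_zero_of_mul hPQ
  have hQ := right_ne_zero_of_mul hPQ
  have mul_pow_eq (x : F) : (w * x) ^ (3 * k) = x ^ (3 * k) := by
    rw [mul_pow, pow_mul w, hw3.pow_eq_one, one_pow, one_mul]
  rw [← mul_pow_eq, pow_eq_one_iff_exists_intCast_add_pow_eq (by norm_num) hq3 hw3
    (two_mul_add_one_pow_char hq3 hw) (mul_ne_zero h2 hs0) (mul_ne_zero hw0 (div_ne_zero hP hQ))]
  refine exists_congr fun t ↦ ?_
  rw [← CharP.intCast_eq_intCast F q, mul_div_assoc', div_mul_eq_mul_div, eq_div_iff hQ,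
    ← sub_eq_zero, eq_comm (a := (_ ^ 3 * _ : F)), ← sub_eq_zero (b := (_ ^ 3 * _ : F))]
  push_cast
  rw [← mul_eq_zero_iff_left (neg_ne_zero.2 hs0), ← slope_identity hw, mul_eq_zero_iff_left hw0]

namespace EisensteinInt

theorem mulChar_natCast_eq_one_iff {F : Type*} [Field F] [IsAlgClosed F] {q p : ℕ} [Fact q.Prime]
    [Fact p.Prime] [CharP F q] (hpq : p ≠ q) {m : ℕ} {ε : ℤˣ} (hq : (q : ℤ) = 3 * m + ε)
    (f : EisensteinInt →+* F) {χ : MulChar (ZMod p) EisensteinInt} (hχ : orderOf χ = 3) :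
    χ q = 1 ↔ (f (jacobiSum χ χ) / f (star (jacobiSum χ χ))) ^ m = 1 := by
  have : NeZero (3 : F) := ⟨by exact_mod_cast natCast_ne_zero_of_char_eq_mul_add_unit hq⟩
  have hfω : IsPrimitiveRoot (f ω) 3 :=
    isPrimitiveRoot_three_iff.2 (map_omega_sq_add f)
  have hχ₃ : χ ^ 3 = 1 := by rw [← hχ, pow_orderOf_eq_one]
  have apply_eq_one_iff {x : ZMod p} (hx : x ≠ 0) : χ.ringHomComp f x = 1 ↔ χ x = 1 :=
    ringHomComp_apply_eq_one_iff hχ₃ isPrimitiveRoot_omega hfω hx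
  have hχF₃ : χ.ringHomComp f ^ 3 = 1 := by
    rw [MulChar.ringHomComp_pow, hχ₃, MulChar.ringHomComp_one]
  have hχF : χ.ringHomComp f ≠ 1 := by
    intro h
    have : χ = 1 := MulChar.ext fun x ↦ by
      rw [MulChar.one_apply_coe, ← apply_eq_one_iff x.ne_zero, h, MulChar.one_apply_coe]
    simp [this] at hχ
  have hq0 : (q : ZMod p) ≠ 0 := CharP.cast_ne_zero_of_ne_of_prime _ Fact.out hpq
  have hp0 : (p : F) ≠ 0 := CharP.cast_ne_zero_of_ne_of_prime F Fact.out hpq.symm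
  have : NeZero (p : F) := ⟨hp0⟩
  obtain ⟨ζ, hζ⟩ := HasEnoughRootsOfUnity.exists_primitiveRoot F p
  rw [← apply_eq_one_iff hq0, mulChar_natCast_eq_one_iff_jacobiSum hq0 hq (by rwa [ZMod.card]) hχF₃
    hχF (AddChar.zmodChar_primitive_of_primitive_root p hζ), MulChar.ringHomComp_inv,
    jacobiSum_ringHomComp, jacobiSum_ringHomComp, jacobiSum_inv_inv]

theorem map_div_map_star_eq {F : Type*} [Field F] (h2 : (2 : F) ≠ 0) (f : EisensteinInt →+* F)
    {y z : EisensteinInt} (hz : 2 * z = y ∨ 2 * z = -y) :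
    f z / f (star z) = f y / f (star y) := by
  rw [← mul_div_mul_left _ _ h2]
  rcases hz with rfl | hz
  · simp [map_ofNat f]
  · obtain rfl := neg_eq_iff_eq_neg.2 hz
    simp [map_ofNat f]

theorem exists_cube_modEq_iff {F : Type*} [Field F] [IsAlgClosed F] {q p : ℕ} [Fact q.Prime]
    [Fact p.Prime] [CharP F q] (hq2 : q ≠ 2) (hpq : p ≠ q) (hp3 : p % 3 = 1) {L M : ℤ}
    (h : 4 * p = L ^ 2 + 27 * M ^ 2) {m : ℕ} {ε : ℤˣ} (hq : (q : ℤ) = 3 * m + ε)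
    (f : EisensteinInt →+* F) :
    (∃ x : ℤ, x ^ 3 ≡ q [ZMOD p]) ↔
      ((L + 3 * (2 * f ω + 1) * M) / (L - 3 * (2 * f ω + 1) * M)) ^ m = 1 := by
  have h2 : (2 : F) ≠ 0 := Ring.two_ne_zero (by rwa [ringChar.eq F q])
  obtain ⟨χ, hχ, hJ⟩ := exists_mulChar_two_mul_jacobiSum_eq hp3 h
  have hqp : ((q : ℤ) : ZMod p) ≠ 0 := by
    exact_mod_cast CharP.cast_ne_zero_of_ne_of_prime (ZMod p) Fact.out hpq
  rw [exists_pow_modEq_iff hχ hqp, Int.cast_natCast, mulChar_natCast_eq_one_iff hpq hq f hχ,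
    map_div_map_star_eq h2 f hJ, star_add_three_mul_sqrtNegThree_mul]
  simp [sqrtNegThree, map_ofNat f]

end EisensteinInt

/-- For a prime `q ≡ ±1 (mod 9)` and a prime `p ≡ 1 (mod 3)`, `p ≠ q`, with
`4p = L² + 27M²`: `q` is a cubic residue mod `p` iff
`(t³−3t²−9t+3)L ≡ −3(t³+9t²−9t−9)M (mod q)` for some integer `t`. -/
theorem one_mod_nine_cubic_residue (q p : ℕ) (hq : q.Prime)
    (hq9 : q % 9 = 1 ∨ q % 9 = 8)
    (hp : p.Prime) (hp3 : p % 3 = 1) (hpq : p ≠ q)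
    (L M : ℤ) (h : (4 * p : ℤ) = L ^ 2 + 27 * M ^ 2) :
    (∃ x : ℤ, x ^ 3 ≡ (q : ℤ) [ZMOD (p : ℤ)]) ↔
      ∃ t : ℤ, (t ^ 3 - 3 * t ^ 2 - 9 * t + 3) * L ≡
        -3 * (t ^ 3 + 9 * t ^ 2 - 9 * t - 9) * M [ZMOD (q : ℤ)] := by
  have : Fact q.Prime := ⟨hq⟩
  have : Fact p.Prime := ⟨hp⟩
  obtain ⟨k, ε, hk⟩ : ∃ (k : ℕ) (ε : ℤˣ), (q : ℤ) = 9 * k + ε := by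
    rcases hq9 with hq1 | hq8
    · exact ⟨q / 9, 1, by simp; lia⟩
    · exact ⟨q / 9 + 1, -1, by simp; lia⟩
  have hq3 : (q : ℤ) = 3 * (3 * k : ℕ) + ε := by
    push_cast
    lia
  have hLM : ¬(q : ℤ) ∣ L ^ 2 + 27 * M ^ 2 := by
    rw [← h]
    norm_cast
    rw [hq.dvd_mul, Nat.prime_dvd_prime_iff_eq hq hp]
    rintro (h4 | rfl)
    · have := Nat.le_of_dvd four_pos h4
      have := hq.two_le
      lia
    · exact hpq rfl
  obtain ⟨f⟩ := EisensteinInt.nonempty_ringHom (AlgebraicClosure (ZMod q))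
  rw [EisensteinInt.exists_cube_modEq_iff (by lia) hpq hp3 h hq3 f,
    exists_slope_modEq_iff hk (EisensteinInt.map_omega_sq_add f) hLM]
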